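/- Let S (steps) and U (users) be finite sets, let Â ⊆ U × S be an authorization policy, let C be a set of unordered pairs {s, s'} of distinct steps (separation-of-duty constraints), and let τ ∈ ℕ. Suppose A ⊆ Â is an authorization relation such that |A(s)| ≥ τ + 1 for every s ∈ S and A(s) ∩ A(s') = ∅ for every {s, s'} ∈ C. Then for every set T ⊆ U with |T| ≤ τ there exists a function π : S → U such that for every s ∈ S, π(s) ∈ A(s) and π(s) ∉ T (in particular (π(s), s) ∈ Â), and π(s) ≠ π(s') for every {s, s'} ∈ C. -/

import Mathlib

open Finset

namespace APEP

variable {S U : Type*} [Fintype S] [Fintype U] [DecidableEq S] [DecidableEq U]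

/-- The set of users authorized for step `s` by `A`. -/
def ares (A : Finset (U × S)) (s : S) : Finset U := univ.filter (fun u => (u, s) ∈ A)

omit [Fintype S] in
theorem mem_ares {A : Finset (U × S)} {s : S} {u : U} : u ∈ ares A s ↔ (u, s) ∈ A := by
  simp [ares]

theorem exists_forall_mem_sdiff_of_mk_lt_mk {ι α : Type*} {A : ι → Set α} {T : Set α}
    (h : ∀ i, Cardinal.mk T < Cardinal.mk (A i)) : ∃ f : ι → α, ∀ i, f i ∈ A i \ T :=
  Classical.skolem.mp fun i => Cardinal.sdiff_nonempty_of_mk_lt_mk (h i)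

theorem resilient_extended_plan_general {S U : Type*} {Ahat A : S → Set U} {C : Set (S × S)}
    {τ : Cardinal} (hsub : ∀ s, A s ⊆ Ahat s) (hcard : ∀ s, τ < Cardinal.mk (A s))
    (hsod : ∀ p ∈ C, Disjoint (A p.1) (A p.2)) {T : Set U} (hT : Cardinal.mk T ≤ τ) :
    ∃ π : S → U, (∀ s, π s ∈ A s ∧ π s ∉ T ∧ π s ∈ Ahat s) ∧ ∀ p ∈ C, π p.1 ≠ π p.2 := by
  obtain ⟨π, hπ⟩ := exists_forall_mem_sdiff_of_mk_lt_mk fun s => hT.trans_lt (hcard s)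
  exact ⟨π, fun s => ⟨(hπ s).1, (hπ s).2, hsub s (hπ s).1⟩,
    fun p hp => (hsod p hp).ne_of_mem (hπ p.1).1 (hπ p.2).1⟩

theorem resilient_extended_plan
    (Ahat A : Finset (U × S))
    -- SoD constraints: unordered pairs of distinct steps, represented as ordered pairs
    (Cst : Finset (S × S)) (hdist : ∀ p ∈ Cst, p.1 ≠ p.2)
    (τ : ℕ)
    (hsub : A ⊆ Ahat)
    (hcard : ∀ s : S, τ + 1 ≤ (ares A s).card)
    (hsod : ∀ p ∈ Cst, (ares A p.1) ∩ (ares A p.2) = ∅) :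
    ∀ T : Finset U, T.card ≤ τ →
      ∃ π : S → U,
        (∀ s : S, π s ∈ ares A s ∧ π s ∉ T ∧ (π s, s) ∈ Ahat) ∧
        ∀ p ∈ Cst, π p.1 ≠ π p.2 := by
  intro T hT
  exact resilient_extended_plan_general (A := fun s => ares A s)
    (Ahat := fun s => {u | (u, s) ∈ Ahat}) (C := Cst) (τ := τ) (T := T)
    (fun _ _ hu => hsub (mem_ares.mp hu)) (by simpa using hcard)
    (by simpa [disjoint_iff_inter_eq_empty] using hsod) (by simpa using hT)

end APEP
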